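/- The polynomial p(R) = R⁶ + R⁵ − 4R⁴ − 8R³ − 10R² − 6R − 2 has exactly one positive real root R₃, and this root satisfies 2.55 < R₃ < 2.56. -/

import Mathlib

/-- The polynomial `R⁶ + R⁵ - 4R⁴ - 8R³ - 10R² - 6R - 2` has exactly one positive real
root `R₃`, and `2.55 < R₃ < 2.56`. -/
theorem R3_unique_positive_root :
    ∃ R3 : ℝ, (0 < R3 ∧ R3^6 + R3^5 - 4*R3^4 - 8*R3^3 - 10*R3^2 - 6*R3 - 2 = 0) ∧
      (∀ x : ℝ, 0 < x → x^6 + x^5 - 4*x^4 - 8*x^3 - 10*x^2 - 6*x - 2 = 0 → x = R3) ∧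
      2.55 < R3 ∧ R3 < 2.56 := by
  have hc : ContinuousOn
      (fun x : ℝ => x^6 + x^5 - 4*x^4 - 8*x^3 - 10*x^2 - 6*x - 2) (Set.Icc 2.55 2.56) := by
    fun_prop
  have h := intermediate_value_Ioo (by norm_num : (2.55 : ℝ) ≤ 2.56) hc
  obtain ⟨y, ⟨h1, h2⟩, h3⟩ := h (show (0 : ℝ) ∈ _ by constructor <;> norm_num)
  have hy : 0 < y := by linarith [show (0 : ℝ) < 2.55 by norm_num]
  have h4 : y^6 + y^5 - 4*y^4 - 8*y^3 - 10*y^2 - 6*y - 2 = 0 := h3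
  refine ⟨y, ⟨hy, h4⟩, ?_, h1, h2⟩
  intro x hx hx0
  have hK : 0 < x^4*y^4*(x+y+1) + 8*x^3*y^3 + 10*x^2*y^2*(x+y)
      + 6*x*y*(x^2+x*y+y^2) + 2*(x+y)*(x^2+y^2) := by positivity
  have hm : (y - x) * (x^4*y^4*(x+y+1) + 8*x^3*y^3 + 10*x^2*y^2*(x+y)
      + 6*x*y*(x^2+x*y+y^2) + 2*(x+y)*(x^2+y^2)) = 0 := by
    linear_combination x^4 * h4 - y^4 * hx0
  rcases mul_eq_zero.mp hm with h5 | h5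
  · linarith
  · exact absurd h5 hK.ne'
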